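/- Let k ≥ 1 and let π be a permutation gate on n qubits. Then π is a semi-Clifford gate lying in 𝒞ₖ₊₁ if and only if there exist Clifford permutation gates φ₁, φ₂ and a mismatch-free product μ of multi-controlled NOT gates, each gate in μ having at most k controls, such that π = φ₁ μ φ₂. -/

import Mathlib

/-! Common framework: qubit gates, the Pauli group, the Clifford hierarchy,
permutation gates, Toffoli gates and staircase form, descending multiplications,
multilinear polynomial representations. -/

/-- Vectors in `𝔽₂ⁿ`, indexing computational basis states. -/
abbrev QV (n : ℕ) := Fin n → ZMod 2

/-- `n`-qubit gates: `2ⁿ × 2ⁿ` complex matrices indexed by `𝔽₂ⁿ`. -/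
abbrev QMat (n : ℕ) := Matrix (QV n) (QV n) ℂ

/-- Standard basis vector `eᵢ` of `𝔽₂ⁿ`. -/
def stdBasis (n : ℕ) (i : Fin n) : QV n := fun m => if m = i then 1 else 0

/-- The gate `X^u Z^z`, sending `|b⟩` to `(-1)^(z·b) |b+u⟩`. -/
noncomputable def XZGate (n : ℕ) (u z : QV n) : QMat n :=
  fun a b => if a = b + u then (-1 : ℂ) ^ (∑ i, (z i).val * (b i).val) else 0

/-- The Pauli group on `n` qubits: gates `c·P₁⊗⋯⊗Pₙ`, `c ∈ {±1, ±i}`,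
`Pᵢ ∈ {I,X,Y,Z}`, equivalently phases times `X^u Z^z`. -/
def PauliGroup (n : ℕ) : Set (QMat n) :=
  { P | ∃ (c : ℂ) (u z : QV n),
      (c = 1 ∨ c = -1 ∨ c = Complex.I ∨ c = -Complex.I) ∧ P = c • XZGate n u z }

/-- Level `k` of the Clifford hierarchy `𝒞ₖ` (level 1 is the Pauli group,
level 2 the Clifford group; level 0 is junk/empty). -/
def CliffordLevel (n : ℕ) : ℕ → Set (QMat n)
  | 0 => ∅
  | 1 => PauliGroup n
  | (k+2) => { U | U ∈ Matrix.unitaryGroup (QV n) ℂ ∧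
      ∀ P ∈ PauliGroup n, U * P * star U ∈ CliffordLevel n (k+1) }

/-- The permutation gate of a permutation `f` of `𝔽₂ⁿ`: sends `|v⟩` to `|f v⟩`. -/
noncomputable def permGate (n : ℕ) (f : QV n ≃ QV n) : QMat n :=
  fun a b => if a = f b then 1 else 0

/-- A diagonal gate. -/
def IsDiagonal (n : ℕ) (d : QMat n) : Prop := ∀ a b : QV n, a ≠ b → d a b = 0

/-- A gate is semi-Clifford if it equals `φ₁ d φ₂` for Clifford `φ₁, φ₂` and diagonal `d`. -/
def IsSemiClifford (n : ℕ) (U : QMat n) : Prop :=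
  ∃ φ₁ d φ₂ : QMat n, φ₁ ∈ CliffordLevel n 2 ∧ φ₂ ∈ CliffordLevel n 2 ∧
    IsDiagonal n d ∧ U = φ₁ * d * φ₂

/-- The underlying map of the Toffoli gate `TOF_{i,j,k}`: `v ↦ v + (vᵢvⱼ)·eₖ`. -/
def tofFun (n : ℕ) (i j k : Fin n) (v : QV n) : QV n :=
  fun m => if m = k then v m + v i * v j else v m

/-- A map on `𝔽₂ⁿ` is in staircase form if it is a product (applied left-to-right)
of pairwise distinct Toffoli gates `TOF_{i,j,k}` with `i<j<k` and with targets
nondecreasing in the order the gates are applied. -/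
def IsStaircase (n : ℕ) (g : QV n → QV n) : Prop :=
  ∃ L : List (Fin n × Fin n × Fin n),
    L.Nodup ∧
    (∀ t ∈ L, t.1 < t.2.1 ∧ t.2.1 < t.2.2) ∧
    List.Chain' (fun s t => s.2.2 ≤ t.2.2) L ∧
    g = fun v => L.foldl (fun w t => tofFun n t.1 t.2.1 t.2.2 w) v

/-- A descending multiplication on `𝔽₂ⁿ`: bilinear, associative, commutative,
`eᵢeᵢ = 0`, and for `i < j`, `eᵢeⱼ ∈ span{eₖ : k > j}`. -/
def IsDescendingMul (n : ℕ) (mul : QV n → QV n → QV n) : Prop :=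
  (∀ u v w : QV n, mul (u + v) w = mul u w + mul v w) ∧
  (∀ u v w : QV n, mul u (v + w) = mul u v + mul u w) ∧
  (∀ u v w : QV n, mul (mul u v) w = mul u (mul v w)) ∧
  (∀ u v : QV n, mul u v = mul v u) ∧
  (∀ i : Fin n, mul (stdBasis n i) (stdBasis n i) = 0) ∧
  (∀ i j : Fin n, i < j → ∀ m : Fin n, m ≤ j → mul (stdBasis n i) (stdBasis n j) m = 0)

/-- The product `∏_{i ∈ l} eᵢ` under a multiplication, for a list `l` (junk `0` on `[]`). -/
def dmProdList (n : ℕ) (mul : QV n → QV n → QV n) : List (Fin n) → QV n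
  | [] => 0
  | [i] => stdBasis n i
  | i :: j :: rest => mul (stdBasis n i) (dmProdList n mul (j :: rest))

/-- The product `∏_{i ∈ T} eᵢ` under a multiplication. -/
def dmProd (n : ℕ) (mul : QV n → QV n → QV n) (T : Finset (Fin n)) : QV n :=
  dmProdList n mul (T.sort (· ≤ ·))

/-- `g` is the map `∑_{i∈S} eᵢ ↦ ∑_{∅≠T⊆S} ∏_{i∈T} eᵢ` associated to a multiplication. -/
def dmPiSpec (n : ℕ) (mul : QV n → QV n → QV n) (g : QV n → QV n) : Prop :=
  ∀ S : Finset (Fin n),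
    g (∑ i ∈ S, stdBasis n i) = ∑ T ∈ S.powerset.erase ∅, dmProd n mul T

/-- The bilinear extension of `eᵢeⱼ := g(eᵢ+eⱼ) + eᵢ + eⱼ`. -/
def inducedMul (n : ℕ) (g : QV n → QV n) (u v : QV n) : QV n :=
  ∑ i : Fin n, ∑ j : Fin n,
    (u i * v j) • (g (stdBasis n i + stdBasis n j) + stdBasis n i + stdBasis n j)

/-- Coefficient of the monomial `∏_{i∈T} aᵢ` in the unique multilinear polynomial
over `𝔽₂` representing `g : 𝔽₂ⁿ → 𝔽₂` (Möbius inversion over `𝔽₂`). -/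
def mlCoeff (n : ℕ) (g : QV n → ZMod 2) (T : Finset (Fin n)) : ZMod 2 :=
  ∑ R ∈ T.powerset, g (∑ i ∈ R, stdBasis n i)

/-- Strictly lower triangular matrix. -/
def StrictLowerTri (n : ℕ) (A : Matrix (Fin n) (Fin n) (ZMod 2)) : Prop :=
  ∀ p q : Fin n, p ≤ q → A p q = 0

/-- Multiplication of basis vectors for the gate `U_k`: the basis of `𝔽₂^(2^k-1)` is
indexed by nonempty subsets `S ⊆ [k]`, encoded as indices `a` via the binary digits of
`a+1`; `e_S e_T = e_{S∪T}` if `S ∩ T = ∅` and `e_S e_T = 0` otherwise. -/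
def ukBasisMul (k : ℕ) (a b : Fin (2 ^ k - 1)) : QV (2 ^ k - 1) :=
  if (a.val + 1) &&& (b.val + 1) = 0 then
    (if h : a.val + b.val + 1 < 2 ^ k - 1 then stdBasis (2 ^ k - 1) ⟨a.val + b.val + 1, h⟩
     else 0)
  else 0

/-- The descending multiplication defining `U_k`, extended bilinearly. -/
def ukMul (k : ℕ) (u v : QV (2 ^ k - 1)) : QV (2 ^ k - 1) :=
  ∑ a : Fin (2 ^ k - 1), ∑ b : Fin (2 ^ k - 1), (u a * v b) • ukBasisMul k a b

/-- The underlying map of the multi-controlled NOT gate with control set `C` and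
target `t`: `v ↦ v + (∏_{i∈C} vᵢ)·e_t`. -/
def mcxFun (n : ℕ) (C : Finset (Fin n)) (t : Fin n) (v : QV n) : QV n :=
  fun m => if m = t then v m + ∏ i ∈ C, v i else v m

section Helpers

noncomputable def sg (x : ZMod 2) : ℂ := (-1 : ℂ) ^ x.val

lemma z2cases (x : ZMod 2) : x = 0 ∨ x = 1 := by
  revert x; decide

lemma sg_zero : sg 0 = 1 := by simp [sg]
lemma sg_one : sg 1 = -1 := by simp [sg, ZMod.val_one]

lemma sg_add (x y : ZMod 2) : sg (x + y) = sg x * sg y := by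
  rcases z2cases x with rfl | rfl <;> rcases z2cases y with rfl | rfl <;>
    simp [sg_zero, sg_one, CharTwo.add_self_eq_zero]

lemma sg_sq (x : ZMod 2) : sg x * sg x = 1 := by
  rw [← sg_add, CharTwo.add_self_eq_zero, sg_zero]

lemma sg_ne (x : ZMod 2) : sg x ≠ 0 := by
  intro h; have := sg_sq x; simp [h] at this

lemma sg_star (x : ZMod 2) : star (sg x) = sg x := by
  rcases z2cases x with rfl | rfl <;> simp [sg_zero, sg_one]

lemma sg_inj {x y : ZMod 2} (h : sg x = sg y) : x = y := by
  rcases z2cases x with rfl | rfl <;> rcases z2cases y with rfl | rfl <;>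
    simp [sg_zero, sg_one] at h ⊢ <;> norm_num [Complex.ext_iff] at h

lemma sg_sum {ι : Type*} (s : Finset ι) (x : ι → ZMod 2) :
    sg (∑ i ∈ s, x i) = ∏ i ∈ s, sg (x i) := by
  classical
  induction s using Finset.induction_on with
  | empty => simp [sg_zero]
  | insert a s ha ih => rw [Finset.sum_insert ha, Finset.prod_insert ha, sg_add, ih]

lemma sg_mul_val (x y : ZMod 2) : (-1 : ℂ) ^ (x.val * y.val) = sg (x * y) := by
  rcases z2cases x with rfl | rfl <;> rcases z2cases y with rfl | rfl <;>
    simp [sg_zero, sg_one, ZMod.val_one]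

variable {n : ℕ}

lemma qadd (a : QV n) : a + a = 0 := by
  ext i; exact CharTwo.add_self_eq_zero _

lemma qadd2 (a b : QV n) : a + b + b = a := by rw [add_assoc, qadd, add_zero]

lemma eq_add_iff (a b u : QV n) : a = b + u ↔ b = a + u := by
  constructor <;> (rintro rfl; rw [qadd2])

lemma XZ_apply (u z a b : QV n) :
    XZGate n u z a b = if a = b + u then sg (z ⬝ᵥ b) else 0 := by
  unfold XZGate
  congr 1
  rw [dotProduct, sg_sum, ← Finset.prod_pow_eq_pow_sum]
  exact Finset.prod_congr rfl fun i _ => sg_mul_val _ _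

lemma mul_XZ_apply (M : QMat n) (u z a b : QV n) :
    (M * XZGate n u z) a b = M a (b + u) * sg (z ⬝ᵥ b) := by
  rw [Matrix.mul_apply, Finset.sum_eq_single (b + u)]
  · rw [XZ_apply, if_pos rfl]
  · intro c _ hc; rw [XZ_apply, if_neg hc, mul_zero]
  · simp

lemma XZ_mul_apply (M : QMat n) (u z a b : QV n) :
    (XZGate n u z * M) a b = sg (z ⬝ᵥ (a + u)) * M (a + u) b := by
  rw [Matrix.mul_apply, Finset.sum_eq_single (a + u)]
  · rw [XZ_apply, if_pos (by rw [qadd2])]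
  · intro c _ hc; rw [XZ_apply, if_neg, zero_mul]
    rw [eq_add_iff]; exact hc
  · simp

lemma XZ_zero : XZGate n 0 0 = 1 := by
  ext a b; rw [XZ_apply, Matrix.one_apply]; simp [sg_zero]

lemma XZ_mul (u z u' z' : QV n) :
    XZGate n u z * XZGate n u' z' = sg (z ⬝ᵥ u') • XZGate n (u + u') (z + z') := by
  ext a b
  rw [mul_XZ_apply, Matrix.smul_apply, XZ_apply, XZ_apply, smul_eq_mul]
  have : b + u' + u = b + (u + u') := by abel
  rw [this]
  split_ifs
  · rw [dotProduct_add, add_dotProduct, sg_add, sg_add]; ring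
  · simp

lemma XZ_star (u z : QV n) : star (XZGate n u z) = sg (z ⬝ᵥ u) • XZGate n u z := by
  ext a b
  rw [Matrix.star_apply, Matrix.smul_apply, XZ_apply, XZ_apply, smul_eq_mul]
  by_cases h : a = b + u
  · have h' := (eq_add_iff _ _ _).1 h
    rw [if_pos h', if_pos h, sg_star, ← sg_add, h]
    congr 1
    rw [dotProduct_add, add_comm]
  · rw [if_neg h, if_neg (fun h' => h ((eq_add_iff _ _ _).1 h'))]; simp

lemma ph_iff (c : ℂ) : (c = 1 ∨ c = -1 ∨ c = Complex.I ∨ c = -Complex.I) ↔ c ^ 4 = 1 := by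
  have : c ^ 4 - 1 = (c - 1) * ((c + 1) * ((c - Complex.I) * (c + Complex.I))) := by
    ring_nf; simp only [Complex.I_sq]; ring
  rw [← sub_eq_zero (a := c ^ 4), this]
  simp only [mul_eq_zero, sub_eq_zero, add_eq_zero_iff_eq_neg]

lemma sg4 (x : ZMod 2) : sg x ^ 4 = 1 := by
  have := sg_sq x
  calc sg x ^ 4 = (sg x * sg x) * (sg x * sg x) := by ring
    _ = 1 := by rw [this, one_mul]

lemma mem_pauli {P : QMat n} : P ∈ PauliGroup n ↔
    ∃ (c : ℂ) (u z : QV n), c ^ 4 = 1 ∧ P = c • XZGate n u z := by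
  unfold PauliGroup
  simp only [Set.mem_ofPred_eq, ph_iff]

lemma pauli_XZ (u z : QV n) : XZGate n u z ∈ PauliGroup n :=
  mem_pauli.2 ⟨1, u, z, by simp, by simp⟩

lemma pauli_smul {c : ℂ} (hc : c ^ 4 = 1) {P : QMat n} (hP : P ∈ PauliGroup n) :
    c • P ∈ PauliGroup n := by
  obtain ⟨d, u, z, hd, rfl⟩ := mem_pauli.1 hP
  exact mem_pauli.2 ⟨c * d, u, z, by rw [mul_pow, hc, hd, one_mul], by rw [smul_smul]⟩

lemma pauli_mul {P Q : QMat n} (hP : P ∈ PauliGroup n) (hQ : Q ∈ PauliGroup n) :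
    P * Q ∈ PauliGroup n := by
  obtain ⟨d, u, z, hd, rfl⟩ := mem_pauli.1 hP
  obtain ⟨d', u', z', hd', rfl⟩ := mem_pauli.1 hQ
  rw [Matrix.smul_mul, Matrix.mul_smul, XZ_mul]
  exact pauli_smul hd (pauli_smul hd' (pauli_smul (sg4 _) (pauli_XZ _ _)))

lemma pauli_star {P : QMat n} (hP : P ∈ PauliGroup n) : star P ∈ PauliGroup n := by
  obtain ⟨d, u, z, hd, rfl⟩ := mem_pauli.1 hP
  rw [star_smul, XZ_star]
  refine pauli_smul ?_ (pauli_smul (sg4 _) (pauli_XZ _ _))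
  rw [← star_pow, hd, star_one]

lemma ph_star {c : ℂ} (hc : c ^ 4 = 1) : c * star c = 1 := by
  rcases (ph_iff c).2 hc with rfl | rfl | rfl | rfl <;> simp

lemma XZ_unit (u z : QV n) : XZGate n u z * star (XZGate n u z) = 1 := by
  rw [XZ_star, Matrix.mul_smul, XZ_mul, smul_smul, sg_sq, qadd, qadd, XZ_zero, one_smul]

lemma pauli_unit {P : QMat n} (hP : P ∈ PauliGroup n) : P * star P = 1 := by
  obtain ⟨d, u, z, hd, rfl⟩ := mem_pauli.1 hP
  rw [star_smul, Matrix.smul_mul, Matrix.mul_smul, smul_smul, XZ_unit, ph_star hd, one_smul]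

lemma pauli_unit' {P : QMat n} (hP : P ∈ PauliGroup n) : star P * P = 1 :=
  mul_eq_one_comm.1 (pauli_unit hP)

lemma pauli_comm {P Q : QMat n} (hP : P ∈ PauliGroup n) (hQ : Q ∈ PauliGroup n) :
    P * Q * star P ∈ PauliGroup n := pauli_mul (pauli_mul hP hQ) (pauli_star hP)

lemma mem_two {U : QMat n} : U ∈ CliffordLevel n 2 ↔
    U * star U = 1 ∧ ∀ P ∈ PauliGroup n, U * P * star U ∈ PauliGroup n := by
  show (U ∈ Matrix.unitaryGroup (QV n) ℂ ∧ _) ↔ _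
  rw [Matrix.mem_unitaryGroup_iff]; rfl

lemma mem_succ {U : QMat n} {k : ℕ} : U ∈ CliffordLevel n (k + 2) ↔
    U * star U = 1 ∧ ∀ P ∈ PauliGroup n, U * P * star U ∈ CliffordLevel n (k + 1) := by
  show (U ∈ Matrix.unitaryGroup (QV n) ℂ ∧ _) ↔ _
  rw [Matrix.mem_unitaryGroup_iff]

lemma pauli_two {P : QMat n} (hP : P ∈ PauliGroup n) : P ∈ CliffordLevel n 2 :=
  mem_two.2 ⟨pauli_unit hP, fun _ hQ => pauli_comm hP hQ⟩

lemma pauli_finite : (PauliGroup n).Finite := by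
  have : PauliGroup n = ⋃ c ∈ ({1, -1, Complex.I, -Complex.I} : Set ℂ),
      Set.range fun p : QV n × QV n => c • XZGate n p.1 p.2 := by
    ext P
    simp only [PauliGroup, Set.mem_ofPred_eq, Set.mem_iUnion, Set.mem_range, Prod.exists,
      exists_prop, Set.mem_insert_iff, Set.mem_singleton_iff]
    constructor
    · rintro ⟨c, u, z, hc, rfl⟩; exact ⟨c, hc, u, z, rfl⟩
    · rintro ⟨c, hc, u, z, rfl⟩; exact ⟨c, u, z, hc, rfl⟩
  rw [this]
  exact Set.Finite.biUnion (by simp) fun c _ => Set.finite_range _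

lemma two_star {U : QMat n} (hU : U ∈ CliffordLevel n 2) : star U ∈ CliffordLevel n 2 := by
  obtain ⟨h1, h2⟩ := mem_two.1 hU
  have h1' : star U * U = 1 := mul_eq_one_comm.1 h1
  refine mem_two.2 ⟨by rw [star_star, h1'], ?_⟩
  intro P hP
  have hinj : Set.InjOn (fun P : QMat n => U * P * star U) (PauliGroup n) := by
    intro A _ B _ h
    have h' : star U * (U * A * star U) * U = star U * (U * B * star U) * U := by
      simp only at h; rw [h]
    have e : ∀ A : QMat n, star U * (U * A * star U) * U = A := fun A => by
      calc star U * (U * A * star U) * U = (star U * U) * A * (star U * U) := by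
            simp only [mul_assoc]
        _ = A := by rw [h1', one_mul, mul_one]
    rwa [e, e] at h'
  have hs := ((pauli_finite (n := n)).injOn_iff_bijOn_of_mapsTo (fun P hP => h2 P hP)).1 hinj
  obtain ⟨Q, hQ, rfl⟩ := hs.surjOn hP
  have : star U * (U * Q * star U) * star (star U) = Q := by
    rw [star_star]
    calc star U * (U * Q * star U) * U = (star U * U) * Q * (star U * U) := by
            simp only [mul_assoc]
        _ = Q := by rw [h1', one_mul, mul_one]
  simp only [this]; exact hQ

lemma two_mul_right {U V : QMat n} {k : ℕ} (hU : U ∈ CliffordLevel n (k + 2))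
    (hV : V ∈ CliffordLevel n 2) : U * V ∈ CliffordLevel n (k + 2) := by
  obtain ⟨h1, h2⟩ := mem_succ.1 hU
  obtain ⟨g1, g2⟩ := mem_two.1 hV
  refine mem_succ.2 ⟨?_, fun P hP => ?_⟩
  · rw [star_mul]
    calc U * V * (star V * star U) = U * (V * star V) * star U := by simp only [mul_assoc]
      _ = 1 := by rw [g1, mul_one, h1]
  · have := h2 _ (g2 P hP)
    rw [star_mul]
    convert this using 1
    simp only [mul_assoc]

lemma two_mul_left_of {U V : QMat n} {k : ℕ} (hU : U ∈ CliffordLevel n (k + 2))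
    (hV : V ∈ CliffordLevel n 2)
    (hc : ∀ U ∈ CliffordLevel n (k + 1), V * U * star V ∈ CliffordLevel n (k + 1)) :
    V * U ∈ CliffordLevel n (k + 2) := by
  obtain ⟨h1, h2⟩ := mem_succ.1 hU
  obtain ⟨g1, g2⟩ := mem_two.1 hV
  refine mem_succ.2 ⟨?_, fun P hP => ?_⟩
  · rw [star_mul]
    calc V * U * (star U * star V) = V * (U * star U) * star V := by simp only [mul_assoc]
      _ = 1 := by rw [h1, mul_one, g1]
  · have := hc _ (h2 P hP)
    rw [star_mul]
    convert this using 1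
    simp only [mul_assoc]

lemma two_conj {V : QMat n} (hV : V ∈ CliffordLevel n 2) : ∀ (k : ℕ),
    ∀ U ∈ CliffordLevel n (k + 1), V * U * star V ∈ CliffordLevel n (k + 1) := by
  intro k
  induction k with
  | zero => exact (mem_two.1 hV).2
  | succ k ih =>
    intro U hU
    exact two_mul_right (two_mul_left_of hU hV ih) (two_star hV)

lemma two_mul_left {U V : QMat n} {k : ℕ} (hU : U ∈ CliffordLevel n (k + 2))
    (hV : V ∈ CliffordLevel n 2) : V * U ∈ CliffordLevel n (k + 2) :=
  two_mul_left_of hU hV (two_conj hV k)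

lemma mul_pauli {U P : QMat n} {k : ℕ} (hU : U ∈ CliffordLevel n (k + 1))
    (hP : P ∈ PauliGroup n) : U * P ∈ CliffordLevel n (k + 1) := by
  cases k with
  | zero => exact pauli_mul hU hP
  | succ k => exact two_mul_right hU (pauli_two hP)

lemma mul_pauli_iff {U P : QMat n} {k : ℕ} (hP : P ∈ PauliGroup n) :
    U * P ∈ CliffordLevel n (k + 1) ↔ U ∈ CliffordLevel n (k + 1) := by
  refine ⟨fun h => ?_, fun h => mul_pauli h hP⟩
  have := mul_pauli h (pauli_star hP)
  rwa [mul_assoc, pauli_unit hP, mul_one] at this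

lemma two_sandwich_iff {U V W : QMat n} {k : ℕ} (hV : V ∈ CliffordLevel n 2)
    (hW : W ∈ CliffordLevel n 2) :
    V * U * W ∈ CliffordLevel n (k + 2) ↔ U ∈ CliffordLevel n (k + 2) := by
  refine ⟨fun h => ?_, fun h => two_mul_right (two_mul_left h hV) hW⟩
  have := two_mul_left (two_mul_right h (two_star hW)) (two_star hV)
  have hv : star V * V = 1 := mul_eq_one_comm.1 (mem_two.1 hV).1
  have hw : W * star W = 1 := (mem_two.1 hW).1
  have e : star V * (V * U * W * star W) = (star V * V) * U * (W * star W) := by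
    simp only [mul_assoc]
  rwa [e, hv, hw, one_mul, mul_one] at this

/-- Degree at most `k`, through iterated derivatives. -/
def DegLE : ℕ → (QV n → ZMod 2) → Prop
  | 0, p => ∀ u v, p u = p v
  | (k + 1), p => ∀ u, DegLE k (fun v => p (v + u) + p v)

lemma DegLE.congr {k : ℕ} {p q : QV n → ZMod 2} (h : DegLE k p) (e : ∀ v, q v = p v) :
    DegLE k q := by
  have : q = p := funext e
  rwa [this]

lemma DegLE.const (k : ℕ) (c : ZMod 2) : DegLE k (fun _ : QV n => c) := by
  induction k generalizing c with
  | zero => intro u v; rfl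
  | succ k ih => intro u; exact ih _

lemma DegLE.add {k : ℕ} {p q : QV n → ZMod 2} (hp : DegLE k p) (hq : DegLE k q) :
    DegLE k (fun v => p v + q v) := by
  induction k generalizing p q with
  | zero => intro u v; simp only [hp u v, hq u v]
  | succ k ih => intro u; exact (ih (hp u) (hq u)).congr fun v => by ring

lemma DegLE.sum {k : ℕ} {ι : Type*} (s : Finset ι) {p : ι → QV n → ZMod 2}
    (hp : ∀ i ∈ s, DegLE k (p i)) : DegLE k (fun v => ∑ i ∈ s, p i v) := by
  classical
  induction s using Finset.induction_on with
  | empty => simpa using DegLE.const k 0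
  | insert a s ha ih =>
    simp only [Finset.sum_insert ha]
    exact (hp a (by simp)).add (ih fun i hi => hp i (by simp [hi]))

lemma DegLE.list_sum {k : ℕ} {ι : Type*} (L : List ι) {p : ι → QV n → ZMod 2}
    (hp : ∀ i ∈ L, DegLE k (p i)) : DegLE k (fun v => (L.map (fun i => p i v)).sum) := by
  induction L with
  | nil => simpa using DegLE.const k 0
  | cons a s ih =>
    simp only [List.map_cons, List.sum_cons]
    exact (hp a (by simp)).add (ih fun i hi => hp i (by simp [hi]))

lemma DegLE.shift {k : ℕ} {p : QV n → ZMod 2} (hp : DegLE k p) (u : QV n) :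
    DegLE k (fun v => p (v + u)) := by
  induction k generalizing p with
  | zero => intro a b; exact hp _ _
  | succ k ih =>
    intro a
    exact (ih (hp a)).congr fun v => by rw [add_right_comm]

lemma DegLE.succ {k : ℕ} {p : QV n → ZMod 2} (hp : DegLE k p) : DegLE (k + 1) p := by
  intro u; exact (hp.shift u).add hp

lemma DegLE.mono {k l : ℕ} (h : k ≤ l) {p : QV n → ZMod 2} (hp : DegLE k p) : DegLE l p := by
  induction h with
  | refl => exact hp
  | step _ ih => exact ih.succ

lemma DegLE.smul {k : ℕ} {p : QV n → ZMod 2} (hp : DegLE k p) (c : ZMod 2) :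
    DegLE k (fun v => c * p v) := by
  rcases z2cases c with rfl | rfl
  · simpa using DegLE.const k 0
  · simpa using hp

lemma DegLE.coord_mul {k : ℕ} {p : QV n → ZMod 2} (hp : DegLE k p) (i : Fin n) :
    DegLE (k + 1) (fun v => v i * p v) := by
  induction k generalizing p with
  | zero =>
    intro u a b
    simp only [hp (a + u) 0, hp a 0, hp (b + u) 0, hp b 0, Pi.add_apply]
    have h1 := CharTwo.add_self_eq_zero (a i * p 0)
    have h2 := CharTwo.add_self_eq_zero (b i * p 0)
    linear_combination h1 - h2
  | succ k ih =>
    intro u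
    refine ((ih (hp u)).add ((hp.shift u).smul (u i))).congr fun v => ?_
    simp only [Pi.add_apply]; ring

lemma DegLE.monomial (S : Finset (Fin n)) : DegLE S.card (fun v : QV n => ∏ i ∈ S, v i) := by
  induction S using Finset.induction_on with
  | empty => simpa using DegLE.const 0 (n := n) 1
  | insert a s ha ih =>
    simp only [Finset.prod_insert ha, Finset.card_insert_of_notMem ha]
    exact ih.coord_mul a

/-- Diagonal sign gate. -/
noncomputable def Dg (p : QV n → ZMod 2) : QMat n := Matrix.diagonal fun v => sg (p v)

lemma Dg_star (p : QV n → ZMod 2) : star (Dg p) = Dg p := by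
  rw [Dg, Matrix.star_eq_conjTranspose, Matrix.diagonal_conjTranspose]
  congr 1; funext v; exact sg_star _

lemma Dg_unit (p : QV n → ZMod 2) : Dg p * star (Dg p) = 1 := by
  rw [Dg_star, Dg, Matrix.diagonal_mul_diagonal]
  simp [sg_sq]

lemma Dg_conj (p : QV n → ZMod 2) (u z : QV n) :
    Dg p * XZGate n u z * star (Dg p) = Dg (fun v => p (v + u) + p v) * XZGate n u z := by
  rw [Dg_star]
  ext a b
  simp only [Dg, Matrix.mul_diagonal, Matrix.diagonal_mul]
  rw [XZ_apply]
  split_ifs with h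
  · rw [← (eq_add_iff _ _ _).1 h, sg_add]; ring
  · simp

lemma additive_dot (q : QV n → ZMod 2) (hq : ∀ a b, q (a + b) = q a + q b) :
    ∃ z : QV n, ∀ v, q v = z ⬝ᵥ v := by
  let F : QV n →+ ZMod 2 := AddMonoidHom.mk' q hq
  let G : QV n →ₗ[ZMod 2] ZMod 2 := F.toZModLinearMap 2
  refine ⟨fun i => q (Pi.single i 1), fun v => ?_⟩
  have : q v = G v := rfl
  rw [this, LinearMap.pi_apply_eq_sum_univ G v, dotProduct]
  refine Finset.sum_congr rfl fun i _ => ?_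
  rw [smul_eq_mul, mul_comm]
  congr 1
  show q _ = q _
  congr 1
  ext j
  simp [Pi.single_apply, eq_comm]

lemma Dg_one_iff (p : QV n → ZMod 2) : Dg p ∈ PauliGroup n ↔ DegLE 1 p := by
  constructor
  · intro h
    obtain ⟨c, u, z, hc, h⟩ := mem_pauli.1 h
    have key : ∀ v, sg (p v) = c * sg (z ⬝ᵥ v) := by
      intro v
      have hv := congrFun (congrFun h v) v
      rw [Matrix.smul_apply, XZ_apply, Dg, Matrix.diagonal_apply_eq] at hv
      split_ifs at hv with hu
      · simpa using hv
      · exact absurd (by simpa using hv) (sg_ne (p v))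
    intro u a b
    apply sg_inj
    simp only [sg_add, key, dotProduct_add]
    have h1 := sg_sq (z ⬝ᵥ a)
    have h2 := sg_sq (z ⬝ᵥ b)
    linear_combination c ^ 2 * sg (z ⬝ᵥ u) * (h1 - h2)
  · intro h
    obtain ⟨z, hz⟩ := additive_dot (fun v => p v + p 0) (by
      intro a b
      have := h b a 0
      simp only [zero_add] at this
      have h1 := CharTwo.add_self_eq_zero (p a)
      have h2 := CharTwo.add_self_eq_zero (p 0)
      linear_combination this - h1)
    have : Dg p = sg (p 0) • XZGate n 0 z := by
      ext a b
      rw [Matrix.smul_apply, XZ_apply, Dg, Matrix.diagonal_apply, add_zero]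
      split_ifs with hab
      · rw [← hab, smul_eq_mul, ← hz, ← sg_add]
        congr 1
        have h2 := CharTwo.add_self_eq_zero (p 0)
        linear_combination -h2
      · simp
    rw [this]
    exact pauli_smul (sg4 _) (pauli_XZ _ _)

lemma Dg_iff (k : ℕ) (p : QV n → ZMod 2) :
    Dg p ∈ CliffordLevel n (k + 1) ↔ DegLE (k + 1) p := by
  induction k generalizing p with
  | zero => exact Dg_one_iff p
  | succ k ih =>
    rw [mem_succ]
    constructor
    · rintro ⟨-, h⟩ u
      have := h _ (pauli_XZ u 0)
      rw [Dg_conj, mul_pauli_iff (pauli_XZ _ _), ih] at this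
      exact this
    · intro h
      refine ⟨Dg_unit p, fun P hP => ?_⟩
      obtain ⟨c, u, z, hc, rfl⟩ := mem_pauli.1 hP
      rw [Matrix.mul_smul, Matrix.smul_mul, Dg_conj, ← Matrix.mul_smul,
        mul_pauli_iff (pauli_smul hc (pauli_XZ _ _)), ih]
      exact h u

lemma perm_mul_apply (f : QV n ≃ QV n) (M : QMat n) (a b : QV n) :
    (permGate n f * M) a b = M (f.symm a) b := by
  rw [Matrix.mul_apply, Finset.sum_eq_single (f.symm a)]
  · simp [permGate]
  · intro c _ hc
    rw [permGate, if_neg, zero_mul]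
    rintro rfl; simp at hc
  · simp

lemma mul_perm_apply (f : QV n ≃ QV n) (M : QMat n) (a b : QV n) :
    (M * permGate n f) a b = M a (f b) := by
  rw [Matrix.mul_apply, Finset.sum_eq_single (f b)]
  · simp [permGate]
  · intro c _ hc
    rw [permGate, if_neg hc, mul_zero]
  · simp

lemma perm_star (f : QV n ≃ QV n) : star (permGate n f) = permGate n f.symm := by
  ext a b
  rw [Matrix.star_apply, permGate, permGate]
  by_cases h : b = f a
  · simp [h]
  · have : ¬ a = f.symm b := by rintro rfl; simp at h
    simp [h, this]

lemma perm_conj_apply (f : QV n ≃ QV n) (M : QMat n) (a b : QV n) :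
    (permGate n f * M * star (permGate n f)) (f a) (f b) = M a b := by
  rw [perm_star, mul_perm_apply, perm_mul_apply]; simp

lemma perm_unit (f : QV n ≃ QV n) : permGate n f * star (permGate n f) = 1 := by
  rw [perm_star]; ext a b
  rw [mul_perm_apply, permGate, Matrix.one_apply]; simp

lemma perm_comp (f g : QV n ≃ QV n) : permGate n f * permGate n g = permGate n (g.trans f) := by
  ext a b; rw [mul_perm_apply]; rfl

/-- If a conjugated Pauli is Pauli then the `X` part shifts through `f` and
the `Z` part is affine in the output. -/
lemma perm_conj_pauli {f : QV n ≃ QV n} {u z : QV n}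
    (h : permGate n f * XZGate n u z * star (permGate n f) ∈ PauliGroup n) :
    ∃ u' z' : QV n, ∃ c : ZMod 2, ∀ w, f (w + u) = f w + u' ∧ z ⬝ᵥ w = z' ⬝ᵥ f w + c := by
  obtain ⟨c, u', z', hc, h⟩ := mem_pauli.1 h
  have key : ∀ w, f (w + u) = f w + u' ∧ sg (z ⬝ᵥ w) = c * sg (z' ⬝ᵥ f w) := by
    intro w
    have hv := congrFun (congrFun h (f (w + u))) (f w)
    rw [perm_conj_apply, Matrix.smul_apply, XZ_apply, XZ_apply, if_pos rfl] at hv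
    split_ifs at hv with hu
    · exact ⟨hu, by simpa using hv⟩
    · exact absurd (by simpa using hv) (sg_ne (z ⬝ᵥ w))
  refine ⟨u', z', z' ⬝ᵥ f 0, fun w => ⟨(key w).1, sg_inj ?_⟩⟩
  rw [(key w).2, sg_add]
  have h0 := (key 0).2
  rw [dotProduct_zero, sg_zero] at h0
  have h1 := sg_sq (z' ⬝ᵥ f 0)
  linear_combination -sg (z' ⬝ᵥ f w) * sg (z' ⬝ᵥ f 0) * h0 - c * sg (z' ⬝ᵥ f w) * h1

lemma affine_two (f : QV n ≃ QV n) (hf : ∀ a b, f (a + b) = f a + f b + f 0) :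
    permGate n f ∈ CliffordLevel n 2 := by
  refine mem_two.2 ⟨perm_unit f, fun P hP => ?_⟩
  obtain ⟨c, u, z, hc, rfl⟩ := mem_pauli.1 hP
  rw [Matrix.mul_smul, Matrix.smul_mul]
  refine pauli_smul hc ?_
  have hs : ∀ a b, f.symm (a + b + f 0) = f.symm a + f.symm b := by
    intro a b
    apply f.injective
    rw [hf]; simp
  obtain ⟨z', hz'⟩ := additive_dot (fun v => z ⬝ᵥ f.symm (v + f 0)) (by
    intro a b
    rw [← dotProduct_add, ← hs]
    congr 2
    calc a + b + f 0 = a + b + f 0 + f 0 + f 0 := by rw [qadd2]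
      _ = _ := by abel)
  have hz : ∀ w, z ⬝ᵥ w = z' ⬝ᵥ f w + z' ⬝ᵥ f 0 := by
    intro w
    rw [← dotProduct_add, ← hz', qadd2, Equiv.symm_apply_apply]
  have : permGate n f * XZGate n u z * star (permGate n f) =
      sg (z' ⬝ᵥ f 0) • XZGate n (f u + f 0) z' := by
    ext a b
    obtain ⟨a, rfl⟩ := f.surjective a
    obtain ⟨b, rfl⟩ := f.surjective b
    rw [perm_conj_apply, Matrix.smul_apply, XZ_apply, XZ_apply, ← add_assoc, ← hf]
    simp only [f.injective.eq_iff]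
    split_ifs
    · rw [hz, sg_add, smul_eq_mul, mul_comm]
    · simp
  rw [this]
  exact pauli_smul (sg4 _) (pauli_XZ _ _)

lemma dot_split (T : Finset (Fin n)) (x y : QV n) :
    x ⬝ᵥ y = ∑ i ∈ T, x i * y i + ∑ i ∈ Tᶜ, x i * y i := by
  rw [dotProduct, Finset.sum_add_sum_compl]

/-- agreement off `T` -/
def agree (T : Finset (Fin n)) (a b : QV n) : Prop := ∀ i, i ∉ T → a i = b i

instance (T : Finset (Fin n)) (a b : QV n) : Decidable (agree T a b) := by
  unfold agree; infer_instance

/-- Hadamard gates on the qubits in `T`, unnormalised. -/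
noncomputable def Hd0 (T : Finset (Fin n)) : QMat n :=
  fun a b => if agree T a b then sg (∑ t ∈ T, a t * b t) else 0

noncomputable def hnorm (T : Finset (Fin n)) : ℂ := ((Real.sqrt (2 ^ T.card))⁻¹ : ℝ)

noncomputable def Hd (T : Finset (Fin n)) : QMat n := hnorm T • Hd0 T

lemma hnorm_sq (T : Finset (Fin n)) : hnorm T * hnorm T * 2 ^ T.card = 1 := by
  unfold hnorm
  rw [← Complex.ofReal_mul]
  have h : (0 : ℝ) < 2 ^ T.card := by positivity
  have : (Real.sqrt (2 ^ T.card))⁻¹ * (Real.sqrt (2 ^ T.card))⁻¹ = ((2 : ℝ) ^ T.card)⁻¹ := by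
    rw [← mul_inv, Real.mul_self_sqrt h.le]
  rw [this]
  push_cast
  exact inv_mul_cancel₀ (pow_ne_zero _ two_ne_zero)

lemma agree_symm {T : Finset (Fin n)} {a b : QV n} : agree T a b ↔ agree T b a :=
  ⟨fun h i hi => (h i hi).symm, fun h i hi => (h i hi).symm⟩

lemma Hd0_symm (T : Finset (Fin n)) (a b : QV n) : Hd0 T a b = Hd0 T b a := by
  unfold Hd0
  simp only [agree_symm (a := a)]
  simp only [mul_comm]

lemma Hd_star (T : Finset (Fin n)) : star (Hd T) = Hd T := by
  ext a b
  rw [Matrix.star_apply, Hd, Matrix.smul_apply, Matrix.smul_apply, star_smul, Hd0_symm]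
  congr 1
  · unfold hnorm; simp
  · unfold Hd0; split_ifs
    · exact sg_star _
    · simp

lemma sum_sg (T : Finset (Fin n)) (a y : QV n) :
    ∑ c : QV n, (if agree T c a then sg (∑ t ∈ T, c t * y t) else 0) =
      if ∀ t ∈ T, y t = 0 then (2 : ℂ) ^ T.card else 0 := by
  let S : Fin n → Finset (ZMod 2) := fun i => if i ∈ T then Finset.univ else {a i}
  have h1 : ∑ c : QV n, (if agree T c a then sg (∑ t ∈ T, c t * y t) else 0) =
      ∑ c ∈ Fintype.piFinset S, ∏ i, (if i ∈ T then sg (c i * y i) else 1) := by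
    rw [← Finset.sum_filter]
    refine Finset.sum_congr ?_ fun c _ => ?_
    · ext c
      rw [Finset.mem_filter, Fintype.mem_piFinset]
      simp only [Finset.mem_univ, true_and, S, agree]
      refine forall_congr' fun i => ?_
      by_cases hi : i ∈ T <;> simp [hi]
    · rw [sg_sum, Finset.prod_ite_mem, Finset.univ_inter]
  rw [h1, ← Finset.prod_univ_sum S (fun i x => if i ∈ T then sg (x * y i) else 1)]
  have h2 : ∀ i, (∑ x ∈ S i, if i ∈ T then sg (x * y i) else 1) =
      if i ∈ T then (if y i = 0 then 2 else 0) else 1 := by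
    intro i
    by_cases hi : i ∈ T
    · simp only [S, hi, if_true]
      have : (Finset.univ : Finset (ZMod 2)) = {0, 1} := by decide
      rw [this, Finset.sum_pair (by decide)]
      rcases z2cases (y i) with h | h <;> simp [h, sg_zero, sg_one] <;> norm_num
    · simp [S, hi]
  rw [Finset.prod_congr rfl fun i _ => h2 i, Finset.prod_ite_mem, Finset.univ_inter]
  split_ifs with h
  · rw [Finset.prod_congr rfl fun i hi => if_pos (h i hi), Finset.prod_const]
  · push Not at h
    obtain ⟨t, ht, h⟩ := h
    exact Finset.prod_eq_zero ht (if_neg h)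

/-- The basic computation: a controlled shift is a Hadamard conjugate of a diagonal gate. -/
lemma Hd_conj (T : Finset (Fin n)) (h : QV n → QV n)
    (hinv : ∀ a b, agree T a b → h a = h b) (a b : QV n) :
    (Hd T * Dg (fun v => ∑ t ∈ T, v t * h v t) * Hd T) a b =
      if agree T a b ∧ ∀ t ∈ T, a t = b t + h b t then 1 else 0 := by
  rw [Hd, Matrix.mul_smul, Matrix.smul_mul, Matrix.smul_mul, smul_smul, Matrix.smul_apply,
    Matrix.mul_apply, smul_eq_mul]
  simp only [Dg, Matrix.mul_diagonal]
  by_cases hab : agree T a b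
  · have : ∀ c, Hd0 T a c * sg (∑ t ∈ T, c t * h c t) * Hd0 T c b =
        if agree T c b then sg (∑ t ∈ T, c t * (a + b + h b) t) else 0 := by
      intro c
      unfold Hd0
      by_cases hc : agree T c b
      · have hac : agree T a c := fun i hi => (hab i hi).trans (hc i hi).symm
        rw [if_pos hac, if_pos hc, if_pos hc, hinv c b hc, ← sg_add, ← sg_add,
          ← Finset.sum_add_distrib, ← Finset.sum_add_distrib]
        congr 1
        refine Finset.sum_congr rfl fun i _ => ?_
        simp only [Pi.add_apply]; ring
      · rw [if_neg hc, if_neg hc, mul_zero]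
    rw [Finset.sum_congr rfl fun c _ => this c, sum_sg]
    have hiff : (∀ t ∈ T, (a + b + h b) t = 0) ↔ (agree T a b ∧ ∀ t ∈ T, a t = b t + h b t) := by
      simp only [hab, true_and, Pi.add_apply]
      refine forall₂_congr fun t _ => ?_
      rw [add_assoc, CharTwo.add_eq_zero]
    simp only [hiff]
    split_ifs
    · exact hnorm_sq T
    · simp
  · rw [if_neg (fun h => hab h.1), Finset.sum_eq_zero, mul_zero]
    intro c _
    unfold Hd0
    by_cases hc : agree T a c
    · have hcb : ¬ agree T c b := fun h => hab fun i hi => (hc i hi).trans (h i hi)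
      rw [if_neg hcb, mul_zero]
    · rw [if_neg hc, zero_mul, zero_mul]

lemma Hd_sq (T : Finset (Fin n)) : Hd T * Hd T = 1 := by
  have h0 : Dg (fun v : QV n => ∑ t ∈ T, v t * (0 : QV n) t) = 1 := by
    simp [Dg, sg_zero]
  ext a b
  have := Hd_conj T (fun _ => 0) (fun _ _ _ => rfl) a b
  rw [h0, mul_one] at this
  rw [this, Matrix.one_apply]
  congr 1
  simp only [Pi.zero_apply, add_zero, eq_iff_iff]
  constructor
  · rintro ⟨h1, h2⟩
    ext i
    by_cases hi : i ∈ T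
    · exact h2 i hi
    · exact h1 i hi
  · rintro rfl; exact ⟨fun _ _ => rfl, fun _ _ => rfl⟩

lemma Hd_XZ (T : Finset (Fin n)) (u z : QV n) :
    Hd T * XZGate n u z = sg (∑ t ∈ T, u t * z t) •
      (XZGate n (fun i => if i ∈ T then z i else u i) (fun i => if i ∈ T then u i else z i) * Hd T) := by
  ext a b
  rw [Matrix.smul_apply, mul_XZ_apply, XZ_mul_apply, Hd, Matrix.smul_apply, Matrix.smul_apply]
  set u' : QV n := fun i => if i ∈ T then z i else u i
  set z' : QV n := fun i => if i ∈ T then u i else z i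
  have hiff : agree T (a + u') b ↔ agree T a (b + u) := by
    refine forall₂_congr fun i hi => ?_
    simp only [Pi.add_apply, u', hi, if_false]
    constructor
    · intro h; rw [← h, CharTwo.add_cancel_right]
    · intro h; rw [h, CharTwo.add_cancel_right]
  unfold Hd0
  simp only [hiff]
  split_ifs with h
  · simp only [smul_eq_mul]
    suffices key : ∑ t ∈ T, a t * (b + u) t + z ⬝ᵥ b =
        ∑ t ∈ T, u t * z t + z' ⬝ᵥ (a + u') + ∑ t ∈ T, (a + u') t * b t by
      have := congrArg sg key
      simp only [sg_add] at this
      linear_combination hnorm T * this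
    rw [dot_split T, dot_split T]
    have e1 : ∑ i ∈ Tᶜ, z' i * (a + u') i = ∑ i ∈ Tᶜ, z i * b i := by
      refine Finset.sum_congr rfl fun i hi => ?_
      rw [hiff.2 h i (by simpa using hi)]
      simp only [z', (by simpa using hi : i ∉ T), if_false]
    rw [e1]
    have e2 : ∑ t ∈ T, a t * (b + u) t + ∑ i ∈ T, z i * b i =
      ∑ t ∈ T, u t * z t + ∑ i ∈ T, z' i * (a + u') i + ∑ t ∈ T, (a + u') t * b t := by
      rw [← Finset.sum_add_distrib, ← Finset.sum_add_distrib, ← Finset.sum_add_distrib]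
      refine Finset.sum_congr rfl fun i hi => ?_
      simp only [u', z', hi, if_true, Pi.add_apply]
      have := CharTwo.add_self_eq_zero (u i * z i)
      linear_combination -this
    linear_combination e2
  · simp

lemma Hd_two (T : Finset (Fin n)) : Hd T ∈ CliffordLevel n 2 := by
  refine mem_two.2 ⟨by rw [Hd_star, Hd_sq], fun P hP => ?_⟩
  obtain ⟨c, u, z, hc, rfl⟩ := mem_pauli.1 hP
  rw [Matrix.mul_smul, Matrix.smul_mul, Hd_star, Hd_XZ, Matrix.smul_mul, mul_assoc, Hd_sq, mul_one]
  exact pauli_smul hc (pauli_smul (sg4 _) (pauli_XZ _ _))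

lemma perm_Hd (T : Finset (Fin n)) (F : QV n ≃ QV n) (h : QV n → QV n)
    (hinv : ∀ a b, agree T a b → h a = h b) (hF : ∀ v, F v = v + h v)
    (hsupp : ∀ v i, i ∉ T → h v i = 0) :
    permGate n F = Hd T * Dg (fun v => ∑ t ∈ T, v t * h v t) * Hd T := by
  ext a b
  rw [Hd_conj T h hinv, permGate]
  congr 1
  rw [hF, eq_iff_iff]
  constructor
  · rintro rfl
    exact ⟨fun i hi => by simp [hsupp b i hi], fun t _ => rfl⟩
  · rintro ⟨h1, h2⟩
    ext i
    by_cases hi : i ∈ T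
    · exact h2 i hi
    · rw [h1 i hi]; simp [hsupp b i hi]

lemma agree_shift {T : Finset (Fin n)} {t : Fin n} (ht : t ∈ T) (v : QV n) :
    agree T (v + Pi.single t 1) v := by
  intro i hi
  have : i ≠ t := by rintro rfl; exact hi ht
  simp [this]

lemma shear_iff (T : Finset (Fin n)) (F : QV n ≃ QV n) (h : QV n → QV n)
    (hinv : ∀ a b, agree T a b → h a = h b) (hF : ∀ v, F v = v + h v)
    (hsupp : ∀ v i, i ∉ T → h v i = 0) (k : ℕ) (hk : 1 ≤ k) :
    permGate n F ∈ CliffordLevel n (k + 1) ↔ ∀ t ∈ T, DegLE k (fun v => h v t) := by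
  obtain ⟨k, rfl⟩ : ∃ m, k = m + 1 := ⟨k - 1, by omega⟩
  rw [perm_Hd T F h hinv hF hsupp, two_sandwich_iff (Hd_two T) (Hd_two T), Dg_iff]
  constructor
  · intro hd t ht
    refine (hd (Pi.single t 1)).congr fun v => ?_
    simp only []
    rw [hinv _ _ (agree_shift ht v), ← Finset.sum_add_distrib, Finset.sum_eq_single t]
    · simp only [Pi.add_apply, Pi.single_eq_same]
      have := CharTwo.add_self_eq_zero (v t * h v t)
      linear_combination -this
    · intro i _ hi
      simp only [Pi.add_apply, Pi.single_eq_of_ne hi, add_zero]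
      exact CharTwo.add_self_eq_zero _
    · exact fun h => absurd ht h
  · intro hd
    exact DegLE.sum T fun t ht => (hd t ht).coord_mul t

lemma shear_semi (T : Finset (Fin n)) (F : QV n ≃ QV n) (h : QV n → QV n)
    (hinv : ∀ a b, agree T a b → h a = h b) (hF : ∀ v, F v = v + h v)
    (hsupp : ∀ v i, i ∉ T → h v i = 0) : IsSemiClifford n (permGate n F) := by
  refine ⟨_, _, _, Hd_two T, Hd_two T, ?_, perm_Hd T F h hinv hF hsupp⟩
  intro a b hab
  exact Matrix.diagonal_apply_ne _ hab

lemma isDiag_comm {d E : QMat n} (hd : IsDiagonal n d) (hE : IsDiagonal n E) : d * E = E * d := by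
  have h1 : d = Matrix.diagonal fun i => d i i := by
    ext a b
    by_cases h : a = b
    · subst h; simp
    · rw [Matrix.diagonal_apply_ne _ h, hd a b h]
  have h2 : E = Matrix.diagonal fun i => E i i := by
    ext a b
    by_cases h : a = b
    · subst h; simp
    · rw [Matrix.diagonal_apply_ne _ h, hE a b h]
  rw [h1, h2, Matrix.diagonal_mul_diagonal, Matrix.diagonal_mul_diagonal]
  congr 1; funext i; rw [mul_comm]

lemma Z_diag (z : QV n) : IsDiagonal n (XZGate n 0 z) := by
  intro a b h
  rw [XZ_apply, add_zero, if_neg h]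

lemma semi_B {f : QV n ≃ QV n} (hs : IsSemiClifford n (permGate n f)) (ζ : QV n)
    (hζ : ∀ u, (∃ u', ∀ w, f (w + u) = f w + u') → ζ ⬝ᵥ u = 0) :
    permGate n f * XZGate n 0 ζ * star (permGate n f) ∈ PauliGroup n := by
  obtain ⟨φ₁, d, φ₂, h1, h2, hd, hF⟩ := hs
  have a1 := (mem_two.1 h1).1
  have a2 := (mem_two.1 h2).1
  have b1 : star φ₁ * φ₁ = 1 := mul_eq_one_comm.1 a1
  have b2 : star φ₂ * φ₂ = 1 := mul_eq_one_comm.1 a2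
  have hdd : d * star d = 1 := by
    have hu := perm_unit f
    rw [hF] at hu
    have : star φ₁ * (φ₁ * d * φ₂ * star (φ₁ * d * φ₂)) * φ₁ = d * star d := by
      simp only [star_mul]
      calc _ = (star φ₁ * φ₁) * d * (φ₂ * star φ₂) * star d * (star φ₁ * φ₁) := by
            simp only [mul_assoc]
        _ = _ := by rw [b1, a2, one_mul, mul_one, mul_one]
    rw [← this, hu, mul_one, b1]
  have hconj : ∀ E, IsDiagonal n E → permGate n f * (star φ₂ * E * φ₂) * star (permGate n f)
      = φ₁ * E * star φ₁ := by
    intro E hE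
    rw [hF]
    simp only [star_mul]
    calc _ = φ₁ * (d * (φ₂ * star φ₂) * E) * (φ₂ * star φ₂) * star d * star φ₁ := by
            simp only [mul_assoc]
      _ = φ₁ * (d * E) * star d * star φ₁ := by rw [a2, mul_one, mul_one]
      _ = φ₁ * E * (d * star d) * star φ₁ := by rw [isDiag_comm hd hE]; simp only [mul_assoc]
      _ = _ := by rw [hdd, mul_one]
  have hcomm : ∀ z, XZGate n 0 ζ * (star φ₂ * XZGate n 0 z * φ₂) =
      (star φ₂ * XZGate n 0 z * φ₂) * XZGate n 0 ζ := by
    intro z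
    have hP := (mem_two.1 (two_star h2)).2 _ (pauli_XZ 0 z)
    rw [star_star] at hP
    obtain ⟨c, u, y, hc, hP⟩ := mem_pauli.1 hP
    have hQ := (mem_two.1 h1).2 _ (pauli_XZ 0 z)
    rw [← hconj _ (Z_diag z), hP, Matrix.mul_smul, Matrix.smul_mul] at hQ
    have hQ' := pauli_smul (c := star c) (by rw [← star_pow, hc, star_one]) hQ
    rw [smul_smul, mul_comm, ph_star hc, one_smul] at hQ'
    obtain ⟨u', z', c', hu⟩ := perm_conj_pauli hQ'
    have h0 := hζ u ⟨u', fun w => (hu w).1⟩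
    rw [hP, Matrix.mul_smul, Matrix.smul_mul, XZ_mul, XZ_mul, h0, dotProduct_zero, add_comm 0 u,
      add_comm y ζ]
  set E := φ₂ * XZGate n 0 ζ * star φ₂ with hEdef
  have hEP : E ∈ PauliGroup n := (mem_two.1 h2).2 _ (pauli_XZ 0 ζ)
  have hEc : ∀ z, E * XZGate n 0 z = XZGate n 0 z * E := by
    intro z
    calc E * XZGate n 0 z = φ₂ * XZGate n 0 ζ * star φ₂ * XZGate n 0 z * (φ₂ * star φ₂) := by
          rw [a2, mul_one]
      _ = φ₂ * (XZGate n 0 ζ * (star φ₂ * XZGate n 0 z * φ₂)) * star φ₂ := by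
          simp only [mul_assoc]
      _ = (φ₂ * star φ₂) * XZGate n 0 z * E := by rw [hcomm]; simp only [hEdef, mul_assoc]
      _ = _ := by rw [a2, one_mul]
  have hED : IsDiagonal n E := by
    intro a b hab
    obtain ⟨i, hi⟩ := Function.ne_iff.1 hab
    have := congrFun (congrFun (hEc (Pi.single i 1)) a) b
    rw [mul_XZ_apply, XZ_mul_apply, add_zero, add_zero, single_one_dotProduct,
      single_one_dotProduct] at this
    by_contra hne
    refine hi (sg_inj ?_)
    refine mul_right_cancel₀ hne ?_
    rw [← this, mul_comm]
  have := hconj E hED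
  have e : star φ₂ * E * φ₂ = XZGate n 0 ζ := by
    calc star φ₂ * E * φ₂ = (star φ₂ * φ₂) * XZGate n 0 ζ * (star φ₂ * φ₂) := by
          simp only [hEdef, mul_assoc]
      _ = _ := by rw [b2, one_mul, mul_one]
  rw [e] at this
  rw [this]
  exact (mem_two.1 h1).2 _ hEP

lemma adapted_basis (A : Submodule (ZMod 2) (QV n)) :
    ∃ (b : Module.Basis (Fin n) (ZMod 2) (QV n)) (T : Finset (Fin n)),
      A = Submodule.span (ZMod 2) (b '' (T : Set (Fin n))) := by
  classical
  let bA := Module.Basis.ofVectorSpace (ZMod 2) A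
  have hli : LinearIndependent (ZMod 2) (fun i => (bA i : QV n)) :=
    bA.linearIndependent.map' A.subtype (Submodule.ker_subtype A)
  let B := Module.Basis.sumExtend hli
  let e := B.indexEquiv (Pi.basisFun (ZMod 2) (Fin n))
  refine ⟨B.reindex e, Finset.univ.filter (fun j => ∃ i, e (Sum.inl i) = j), ?_⟩
  have h1 : A = Submodule.span (ZMod 2) (Set.range fun i => (bA i : QV n)) := by
    have := congrArg (Submodule.map A.subtype) bA.span_eq
    rw [Submodule.map_span, Submodule.map_top, Submodule.range_subtype, ← Set.range_comp] at this
    exact this.symm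
  conv_lhs => rw [h1]
  congr 1
  have hB : ∀ i, B (Sum.inl i) = (bA i : QV n) := by
    intro i
    simp [B, Module.Basis.sumExtend]
    rfl
  ext x
  simp only [Set.mem_range, Set.mem_image, Finset.coe_filter, Finset.mem_univ, true_and,
    Set.mem_ofPred_eq, Module.Basis.reindex_apply]
  constructor
  · rintro ⟨i, rfl⟩
    exact ⟨_, ⟨i, rfl⟩, by rw [Equiv.symm_apply_apply, hB]⟩
  · rintro ⟨_, ⟨i, rfl⟩, rfl⟩
    exact ⟨i, by rw [Equiv.symm_apply_apply, hB]⟩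

lemma exists_ann (A : Submodule (ZMod 2) (QV n)) (w : QV n) (hw : w ∉ A) :
    ∃ ζ : QV n, (∀ u ∈ A, ζ ⬝ᵥ u = 0) ∧ ζ ⬝ᵥ w ≠ 0 := by
  obtain ⟨g, hg, hgA⟩ := Submodule.exists_le_ker_of_notMem hw
  obtain ⟨z, hz⟩ := additive_dot (fun v => g v) (fun a b => map_add g a b)
  refine ⟨z, fun u hu => ?_, ?_⟩
  · rw [← hz]; exact hgA hu
  · rw [← hz]; exact hg

lemma normal_form {f : QV n ≃ QV n} (hs : IsSemiClifford n (permGate n f)) :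
    ∃ (T : Finset (Fin n)) (β γ : QV n ≃ QV n) (h : QV n → QV n),
      (∀ a b, β (a + b) = β a + β b + β 0) ∧ (∀ a b, γ (a + b) = γ a + γ b + γ 0) ∧
      (∀ a b, β.symm (a + b) = β.symm a + β.symm b + β.symm 0) ∧
      (∀ a b, agree T a b → h a = h b) ∧ (∀ v i, i ∉ T → h v i = 0) ∧
      ∀ v, f (β v) = γ (v + h v) := by
  let A : Submodule (ZMod 2) (QV n) :=
    { carrier := {u | ∃ u', ∀ w, f (w + u) = f w + u'}
      add_mem' := by
        rintro a b ⟨a', ha⟩ ⟨b', hb⟩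
        exact ⟨a' + b', fun w => by rw [← add_assoc, hb, ha, add_assoc]⟩
      zero_mem' := ⟨0, fun w => by simp⟩
      smul_mem' := by
        rintro c x ⟨x', hx⟩
        rcases z2cases c with rfl | rfl
        · exact ⟨0, fun w => by simp⟩
        · exact ⟨x', fun w => by simpa using hx w⟩ }
  have hAdef : ∀ u, u ∈ A ↔ ∃ u', ∀ w, f (w + u) = f w + u' := fun u => Iff.rfl
  let f0 : QV n → QV n := fun w => f w + f 0
  have f0z : f0 0 = 0 := qadd _
  have f0inj : ∀ a b, f0 a = f0 b → a = b := fun a b h => f.injective (add_right_cancel h)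
  have f0surj : ∀ x, ∃ y, f0 y = x := fun x =>
    ⟨f.symm (x + f 0), by simp only [f0, Equiv.apply_symm_apply]; rw [qadd2]⟩
  have hA : ∀ u ∈ A, ∀ w, f0 (w + u) = f0 w + f0 u := by
    rintro u ⟨u', hu⟩ w
    have h0 := hu 0
    rw [zero_add] at h0
    simp only [f0, hu w, h0]
    calc f w + u' + f 0 = f w + f 0 + u' := by abel
      _ = f w + f 0 + (u' + f 0 + f 0) := by rw [qadd2]
      _ = _ := by abel
  have hB : ∀ ζ : QV n, (∀ u ∈ A, ζ ⬝ᵥ u = 0) → ∃ τ : QV n, ∀ w, ζ ⬝ᵥ w = τ ⬝ᵥ f0 w := by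
    intro ζ hζ
    obtain ⟨_, τ, c, h⟩ := perm_conj_pauli (semi_B hs ζ hζ)
    refine ⟨τ, fun w => ?_⟩
    have h0 := (h 0).2
    rw [dotProduct_zero] at h0
    simp only [f0]
    rw [dotProduct_add, (h w).2]
    have := CharTwo.add_self_eq_zero c
    linear_combination h0 + this
  have hadd : ∀ w w', ∃ y ∈ A, f0 (w + w') = f0 w + f0 w' + f0 y := by
    intro w w'
    obtain ⟨y, hy⟩ := f0surj (f0 (w + w') + (f0 w + f0 w'))
    refine ⟨y, ?_, ?_⟩
    · by_contra hyA
      obtain ⟨ζ, h1, h2⟩ := exists_ann A y hyA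
      obtain ⟨τ, hτ⟩ := hB ζ h1
      apply h2
      rw [hτ, hy, dotProduct_add τ (f0 (w + w')), dotProduct_add τ (f0 w), ← hτ, ← hτ, ← hτ, dotProduct_add]
      exact CharTwo.add_self_eq_zero _
    · rw [hy, add_comm (f0 (w + w')), ← add_assoc, qadd, zero_add]
  obtain ⟨b, T, hT⟩ := adapted_basis A
  let G : QV n →ₗ[ZMod 2] QV n := b.constr (ZMod 2) (fun i => f0 (b i))
  have hGb : ∀ i, G (b i) = f0 (b i) := fun i => b.constr_basis _ _ i
  have hG : ∀ w, ∃ y ∈ A, f0 w = G w + f0 y := by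
    intro w
    have hw : w ∈ Submodule.span (ZMod 2) (Set.range b) := by rw [b.span_eq]; trivial
    induction hw using Submodule.span_induction with
    | mem x hx =>
      obtain ⟨i, rfl⟩ := hx
      exact ⟨0, A.zero_mem, by rw [hGb, f0z, add_zero]⟩
    | zero => exact ⟨0, A.zero_mem, by simp [f0z]⟩
    | add x y _ _ hx hy =>
      obtain ⟨x', hx', ex⟩ := hx
      obtain ⟨y', hy', ey⟩ := hy
      obtain ⟨z, hz, ez⟩ := hadd x y
      refine ⟨x' + y' + z, A.add_mem (A.add_mem hx' hy') hz, ?_⟩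
      rw [hA z hz, hA y' hy', ez, ex, ey, map_add]
      abel
    | smul c x _ hx =>
      rcases z2cases c with rfl | rfl
      · exact ⟨0, A.zero_mem, by simp [f0z]⟩
      · simpa using hx
  have hGA : ∀ w ∈ A, G w = f0 w := by
    intro w hw
    have hw2 := hw
    rw [hT] at hw2
    clear hw
    induction hw2 using Submodule.span_induction with
    | mem x hx =>
      obtain ⟨i, _, rfl⟩ := hx
      exact hGb i
    | zero => simp [f0z]
    | add x y _ hy ex ey =>
      rw [← hT] at hy
      rw [map_add, hA y hy, ex, ey]
    | smul c x _ hx =>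
      rcases z2cases c with rfl | rfl
      · simp [f0z]
      · simpa using hx
  have hGinj : Function.Injective G := by
    rw [injective_iff_map_eq_zero]
    intro w hw
    obtain ⟨y, hy, e⟩ := hG w
    rw [hw, zero_add] at e
    have := f0inj _ _ e
    subst this
    apply f0inj
    rw [← hGA _ hy, hw, f0z]
  let g := LinearEquiv.ofInjectiveEndo G hGinj
  have hg : ∀ w, g w = G w := fun w => rfl
  let β := b.equivFun.symm
  have hβA : ∀ v, β v ∈ A ↔ ∀ i, i ∉ T → v i = 0 := by
    intro v
    rw [hT, b.mem_span_image]
    have : ∀ i, b.repr (β v) i = v i := by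
      intro i
      have := congrFun (b.equivFun.apply_symm_apply v) i
      rwa [Module.Basis.equivFun_apply] at this
    constructor
    · intro h i hi
      by_contra hne
      exact hi (h (by simpa [this] using hne))
    · intro h i hi
      by_contra hne
      have := this i
      rw [h i hne] at this
      simp [this] at hi
  refine ⟨T, β.toEquiv, (β.toEquiv.trans g.toEquiv).trans (Equiv.addRight (f 0)),
    fun v => β.symm (g.symm (f0 (β v))) + v, ?_, ?_, ?_, ?_, ?_, ?_⟩
  · intro a c; simp
  · intro a c
    simp only [Equiv.trans_apply, Equiv.coe_addRight, LinearEquiv.coe_toEquiv, map_add, map_zero,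
      zero_add]
    have := qadd (f 0)
    calc _ = g (β a) + g (β c) + f 0 + f 0 + f 0 := by rw [qadd2]
      _ = _ := by abel
  · intro a c
    show β.symm (a + c) = β.symm a + β.symm c + β.symm 0
    simp
  · intro a c hac
    have hu : β (a + c) ∈ A := by
      rw [hβA]
      intro i hi
      rw [Pi.add_apply, hac i hi]; exact CharTwo.add_self_eq_zero _
    have e : a = c + (a + c) := by rw [add_comm a c, ← add_assoc, qadd, zero_add]
    have e2 : f0 (β a) = f0 (β c) + g (β (a + c)) := by
      conv_lhs => rw [e, map_add, hA _ hu, ← hGA _ hu]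
      rfl
    simp only [e2, map_add, LinearEquiv.symm_apply_apply]
    calc _ = β.symm (g.symm (f0 (β c))) + c + (a + a) := by abel
      _ = _ := by rw [qadd, add_zero]
  · intro v i hi
    obtain ⟨y, hy, e⟩ := hG (β v)
    rw [← hGA y hy, ← hg, ← hg] at e
    have hy' := (hβA (β.symm y)).1 (by rwa [LinearEquiv.apply_symm_apply]) i hi
    simp only [e, map_add, LinearEquiv.symm_apply_apply, Pi.add_apply, hy', add_zero]
    exact CharTwo.add_self_eq_zero _
  · intro v
    simp only [Equiv.trans_apply, Equiv.coe_addRight, LinearEquiv.coe_toEquiv]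
    have : v + (β.symm (g.symm (f0 (β v))) + v) = β.symm (g.symm (f0 (β v))) := by
      rw [add_comm, qadd2]
    rw [this, LinearEquiv.apply_symm_apply, LinearEquiv.apply_symm_apply]
    exact (qadd2 _ _).symm

lemma mobius (Q : Finset (Fin n)) (P : Finset (Fin n) → ZMod 2) :
    ∑ S ∈ Q.powerset, ∑ R ∈ S.powerset, P R = P Q := by
  induction Q using Finset.induction_on generalizing P with
  | empty => simp
  | insert a Q ha ih =>
    rw [Finset.sum_powerset_insert ha]
    have : ∀ S ∈ Q.powerset, ∑ R ∈ (insert a S).powerset, P R =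
        ∑ R ∈ S.powerset, P R + ∑ R ∈ S.powerset, P (insert a R) := by
      intro S hS
      exact Finset.sum_powerset_insert (fun h => ha (Finset.mem_powerset.1 hS h)) _
    rw [Finset.sum_congr rfl this, Finset.sum_add_distrib, ← add_assoc,
      CharTwo.add_self_eq_zero, zero_add, ih (fun R => P (insert a R))]

/-- indicator vector -/
def ind (R : Finset (Fin n)) : QV n := fun i => if i ∈ R then 1 else 0

def coef (p : QV n → ZMod 2) (S : Finset (Fin n)) : ZMod 2 := ∑ R ∈ S.powerset, p (ind R)

lemma expansion (p : QV n → ZMod 2) (v : QV n) :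
    p v = ∑ S : Finset (Fin n), coef p S * ∏ i ∈ S, v i := by
  let Q : Finset (Fin n) := Finset.univ.filter fun i => v i = 1
  have hv : v = ind Q := by
    ext i
    rcases z2cases (v i) with h | h <;> simp [ind, Q, h]
  have hprod : ∀ S : Finset (Fin n), ∏ i ∈ S, v i = if S ∈ Q.powerset then 1 else 0 := by
    intro S
    split_ifs with h
    · refine Finset.prod_eq_one fun i hi => ?_
      have := Finset.mem_powerset.1 h hi
      simpa [Q] using this
    · rw [Finset.mem_powerset, Finset.not_subset] at h
      obtain ⟨i, hi, h⟩ := h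
      refine Finset.prod_eq_zero hi ?_
      rcases z2cases (v i) with h' | h'
      · exact h'
      · simp [Q, h'] at h
  simp only [hprod, mul_ite, mul_one, mul_zero]
  rw [Finset.sum_ite_mem, Finset.univ_inter]
  unfold coef
  rw [mobius Q (fun R => p (ind R)), ← hv]

lemma coef_insert (p : QV n → ZMod 2) (a : Fin n) (S : Finset (Fin n)) (ha : a ∉ S) :
    coef p (insert a S) = coef (fun v => p (v + Pi.single a 1) + p v) S := by
  unfold coef
  rw [Finset.sum_powerset_insert ha, ← Finset.sum_add_distrib]
  refine Finset.sum_congr rfl fun R hR => ?_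
  have haR : a ∉ R := fun h => ha (Finset.mem_powerset.1 hR h)
  rw [add_comm]
  congr 2
  ext i
  by_cases hi : i = a
  · subst hi; simp [ind, haR]
  · simp [ind, hi]

lemma coef_zero (S : Finset (Fin n)) : coef (fun _ => (0 : ZMod 2)) S = 0 := by
  simp [coef]

lemma coef_deg {k : ℕ} {p : QV n → ZMod 2} (hp : DegLE k p) (S : Finset (Fin n))
    (hS : k < S.card) : coef p S = 0 := by
  induction k generalizing p S with
  | zero =>
    obtain ⟨a, ha⟩ := Finset.card_pos.1 hS
    rw [← Finset.insert_erase ha, coef_insert _ _ _ (Finset.notMem_erase a S)]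
    have : (fun v => p (v + Pi.single a 1) + p v) = fun _ => 0 := by
      funext v; rw [hp (v + Pi.single a 1) v]; exact CharTwo.add_self_eq_zero _
    rw [this, coef_zero]
  | succ k ih =>
    obtain ⟨a, ha⟩ := Finset.card_pos.1 (by omega : 0 < S.card)
    rw [← Finset.insert_erase ha, coef_insert _ _ _ (Finset.notMem_erase a S)]
    refine ih (hp _) _ ?_
    rw [Finset.card_erase_of_mem ha]; omega

lemma coef_inv {T : Finset (Fin n)} {p : QV n → ZMod 2} (hp : ∀ a b, agree T a b → p a = p b)
    (S : Finset (Fin n)) {t : Fin n} (hS : t ∈ S) (ht : t ∈ T) : coef p S = 0 := by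
  rw [← Finset.insert_erase hS, coef_insert _ _ _ (Finset.notMem_erase t S)]
  have : (fun v => p (v + Pi.single t 1) + p v) = fun _ => 0 := by
    funext v; rw [hp _ _ (agree_shift ht v)]; exact CharTwo.add_self_eq_zero _
  rw [this, coef_zero]

lemma foldl_mcx (T : Finset (Fin n)) (L : List (Finset (Fin n) × Fin n))
    (h1 : ∀ g ∈ L, g.2 ∈ T) (h2 : ∀ g ∈ L, ∀ i ∈ g.1, i ∉ T) (w : QV n) (m : Fin n) :
    L.foldl (fun w g => mcxFun n g.1 g.2 w) w m =
      w m + (L.map (fun g => if m = g.2 then ∏ i ∈ g.1, w i else 0)).sum := by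
  induction L generalizing w with
  | nil => simp
  | cons g L ih =>
    rw [List.foldl_cons, ih (fun g hg => h1 g (by simp [hg])) (fun g hg => h2 g (by simp [hg])),
      List.map_cons, List.sum_cons, ← add_assoc]
    congr 1
    · unfold mcxFun; split_ifs <;> simp
    · congr 1
      refine List.map_congr_left fun g' hg' => ?_
      congr 1
      refine Finset.prod_congr rfl fun i hi => ?_
      have : i ≠ g.2 := by
        rintro rfl
        exact h2 g' (by simp [hg']) _ hi (h1 g (by simp))
      simp [mcxFun, this]

lemma list_of_shear (T : Finset (Fin n)) (h : QV n → QV n)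
    (hinv : ∀ a b, agree T a b → h a = h b) (hsupp : ∀ v i, i ∉ T → h v i = 0) (k : ℕ)
    (hdeg : ∀ t ∈ T, DegLE k (fun v => h v t)) :
    ∃ L : List (Finset (Fin n) × Fin n), (∀ g ∈ L, g.2 ∈ T) ∧ (∀ g ∈ L, ∀ i ∈ g.1, i ∉ T) ∧
      (∀ g ∈ L, g.1.card ≤ k) ∧
      ∀ v, L.foldl (fun w g => mcxFun n g.1 g.2 w) v = v + h v := by
  classical
  let F : Finset (Finset (Fin n) × Fin n) := Finset.univ.filter fun g =>
    g.2 ∈ T ∧ (∀ i ∈ g.1, i ∉ T) ∧ g.1.card ≤ k ∧ coef (fun v => h v g.2) g.1 = 1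
  have hF : ∀ g ∈ F.toList, g.2 ∈ T ∧ (∀ i ∈ g.1, i ∉ T) ∧ g.1.card ≤ k ∧
      coef (fun v => h v g.2) g.1 = 1 := by
    intro g hg
    rw [Finset.mem_toList] at hg
    exact (Finset.mem_filter.1 hg).2
  have hF1 : ∀ g ∈ F.toList, g.2 ∈ T := fun g hg => (hF g hg).1
  have hF2 : ∀ g ∈ F.toList, ∀ i ∈ g.1, i ∉ T := fun g hg => (hF g hg).2.1
  refine ⟨F.toList, hF1, hF2, fun g hg => (hF g hg).2.2.1, fun v => ?_⟩
  ext m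
  rw [foldl_mcx T _ hF1 hF2, Pi.add_apply]
  congr 1
  rw [Finset.sum_map_toList, Finset.sum_filter, Fintype.sum_prod_type]
  by_cases hm : m ∈ T
  · rw [expansion (fun v => h v m) v]
    refine Finset.sum_congr rfl fun S _ => ?_
    rw [Finset.sum_eq_single m]
    · simp only [hm, true_and, if_true]
      split_ifs with hc
      · rw [hc.2.2, one_mul]
      · rcases z2cases (coef (fun v => h v m) S) with h0 | h0
        · rw [h0, zero_mul]
        · exfalso
          refine hc ⟨fun i hi hiT => ?_, ?_, h0⟩
          · have := coef_inv (p := fun v => h v m) (fun a b hab => by rw [hinv a b hab]) S hi hiT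
            rw [this] at h0; exact absurd h0 (by decide)
          · by_contra hlt
            have := coef_deg (hdeg m hm) S (by omega)
            rw [this] at h0; exact absurd h0 (by decide)
    · intro t _ ht
      simp [Ne.symm ht]
    · simp
  · rw [hsupp v m hm]
    refine Finset.sum_eq_zero fun S _ => Finset.sum_eq_zero fun t _ => ?_
    by_cases ht : m = t
    · subst ht; simp [hm]
    · simp [ht]

lemma semi_sandwich {U V W : QMat n} (hV : V ∈ CliffordLevel n 2) (hW : W ∈ CliffordLevel n 2)
    (hU : IsSemiClifford n U) : IsSemiClifford n (V * U * W) := by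
  obtain ⟨a, d, b, ha, hb, hd, rfl⟩ := hU
  exact ⟨V * a, d, b * W, two_mul_left (k := 0) ha hV, two_mul_right (k := 0) hb hW, hd, by
    simp only [mul_assoc]⟩

lemma list_shear (L : List (Finset (Fin n) × Fin n)) (k : ℕ)
    (hmm : ∀ g ∈ L, ∀ g' ∈ L, g.2 ∉ g'.1) (hc : ∀ g ∈ L, g.1.card ≤ k) :
    ∃ (T : Finset (Fin n)) (h : QV n → QV n), (∀ a b, agree T a b → h a = h b) ∧
      (∀ v i, i ∉ T → h v i = 0) ∧ (∀ t ∈ T, DegLE k (fun v => h v t)) ∧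
      ∀ v, L.foldl (fun w g => mcxFun n g.1 g.2 w) v = v + h v := by
  classical
  let T : Finset (Fin n) := (L.map Prod.snd).toFinset
  have hT : ∀ t, t ∈ T ↔ ∃ g ∈ L, g.2 = t := by intro t; simp [T]
  have h1 : ∀ g ∈ L, g.2 ∈ T := fun g hg => (hT _).2 ⟨g, hg, rfl⟩
  have h2 : ∀ g ∈ L, ∀ i ∈ g.1, i ∉ T := by
    intro g hg i hi hiT
    obtain ⟨g', hg', rfl⟩ := (hT i).1 hiT
    exact hmm g' hg' g hg hi
  refine ⟨T, fun w m => (L.map (fun g => if m = g.2 then ∏ i ∈ g.1, w i else 0)).sum,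
    ?_, ?_, ?_, ?_⟩
  · intro a b hab
    funext m
    refine congrArg List.sum ?_
    refine List.map_congr_left fun g hg => ?_
    congr 1
    exact Finset.prod_congr rfl fun i hi => hab i (h2 g hg i hi)
  · intro v i hi
    refine List.sum_eq_zero fun x hx => ?_
    obtain ⟨g, hg, rfl⟩ := List.mem_map.1 hx
    have : i ≠ g.2 := by rintro rfl; exact hi (h1 g hg)
    simp [this]
  · intro t _
    refine DegLE.list_sum L (p := fun g v => if t = g.2 then ∏ i ∈ g.1, v i else 0) fun g hg => ?_
    by_cases ht : t = g.2
    · simp only [ht, if_true]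
      exact (DegLE.monomial g.1).mono (hc g hg)
    · simp only [ht, if_false]
      exact DegLE.const _ _
  · intro v
    ext m
    exact foldl_mcx T L h1 h2 v m

end Helpers

/-- For `k ≥ 1`, a permutation gate `π` is a semi-Clifford element of
`𝒞ₖ₊₁` iff `π = φ₁ μ φ₂` for Clifford permutation gates `φ₁, φ₂` and a mismatch-free
product `μ` of multi-controlled NOT gates each having at most `k` controls. -/
theorem stmt19 (n k : ℕ) (hn : 1 ≤ n) (hk : 1 ≤ k) (f : QV n ≃ QV n) :
    (IsSemiClifford n (permGate n f) ∧ permGate n f ∈ CliffordLevel n (k + 1)) ↔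
    (∃ (φ₁ φ₂ : QV n ≃ QV n) (L : List (Finset (Fin n) × Fin n)),
      permGate n φ₁ ∈ CliffordLevel n 2 ∧
      permGate n φ₂ ∈ CliffordLevel n 2 ∧
      (∀ g ∈ L, g.2 ∉ g.1) ∧
      (∀ g ∈ L, ∀ g' ∈ L, g.2 ∉ g'.1) ∧
      (∀ g ∈ L, g.1.card ≤ k) ∧
      (∀ v : QV n, f v = φ₁ (L.foldl (fun w g => mcxFun n g.1 g.2 w) (φ₂ v)))) := by
  constructor
  · rintro ⟨hs, hl⟩
    obtain ⟨T, β, γ, h, hβ, hγ, hβs, hinv, hsupp, hf⟩ := normal_form hs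
    let F : QV n ≃ QV n := (β.trans f).trans γ.symm
    have hF : ∀ v, F v = v + h v := by
      intro v
      simp only [F, Equiv.trans_apply, hf, Equiv.symm_apply_apply]
    have hfF : permGate n f = permGate n γ * permGate n F * permGate n β.symm := by
      rw [perm_comp, perm_comp]
      congr 1
      ext1 v
      simp [F]
    have hγ2 := affine_two γ hγ
    have hβ2 := affine_two β.symm hβs
    obtain ⟨m, rfl⟩ : ∃ m, k = m + 1 := ⟨k - 1, by omega⟩
    rw [hfF, two_sandwich_iff hγ2 hβ2, shear_iff T F h hinv hF hsupp (m + 1) hk] at hl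
    obtain ⟨L, h1, h2, h3, h4⟩ := list_of_shear T h hinv hsupp (m + 1) hl
    refine ⟨γ, β.symm, L, hγ2, hβ2, fun g hg hg' => h2 g hg _ hg' (h1 g hg),
      fun g hg g' hg' hgg => h2 g' hg' _ hgg (h1 g hg), h3, fun v => ?_⟩
    rw [h4, ← hf, Equiv.apply_symm_apply]
  · rintro ⟨φ₁, φ₂, L, hφ₁, hφ₂, -, hmm, hc, hf⟩
    obtain ⟨T, h, hinv, hsupp, hdeg, hL⟩ := list_shear L k hmm hc
    let F : QV n ≃ QV n := (φ₂.symm.trans f).trans φ₁.symm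
    have hF : ∀ v, F v = v + h v := by
      intro v
      simp only [F, Equiv.trans_apply, hf, Equiv.symm_apply_apply, Equiv.apply_symm_apply, hL]
    have hfF : permGate n f = permGate n φ₁ * permGate n F * permGate n φ₂ := by
      rw [perm_comp, perm_comp]
      congr 1
      ext1 v
      simp [F]
    rw [hfF]
    refine ⟨semi_sandwich hφ₁ hφ₂ (shear_semi T F h hinv hF hsupp), ?_⟩
    have hl := (shear_iff T F h hinv hF hsupp k hk).2 hdeg
    obtain ⟨m, rfl⟩ : ∃ m, k = m + 1 := ⟨k - 1, by omega⟩
    exact (two_sandwich_iff hφ₁ hφ₂).2 hl
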